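/- Let d ≥ 1, let {e_i}_{0 ≤ i ≤ d−1} be the standard orthonormal basis of ℂ^d, and let {g_{k,l}}_{0 ≤ k,l ≤ d−1} be the generalized Bell basis of ℂ^d ⊗ ℂ^d with g_{k,l}(j, j') = (1/√d)·e^{2π√(−1)·jk/d} if j' ≡ j + l (mod d) and 0 otherwise. Then for any positive semidefinite (d²)×(d²) complex matrices M₀, M₁ with M₀ + M₁ = I (a two-outcome POVM), the average over the d² product basis states of the probability of outcome 1 plus the average over the d² Bell states of the probability of outcome 0 equals exactly 1: (1/d²)·Σ_{i,j} tr(M₁ · |e_i ⊗ e_j⟩⟨e_i ⊗ e_j|) + (1/d²)·Σ_{k,l} tr(M₀ · |g_{k,l}⟩⟨g_{k,l}|) = 1. -/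

import Mathlib

/-!
Both families are orthonormal bases of `ℂ^d ⊗ ℂ^d`, so their rank-one projections resolve the
identity (`sum_outer_stdProdVec`, `sum_outer_bellVec`). By linearity of the trace, the two averages
are therefore `tr M₁ / d²` and `tr M₀ / d²`, and these add up to `tr 1 / d² = 1`. For the Bell basis
the resolution of the identity amounts to the orthogonality of the characters of `ℤ/d`: the sum of
`(ζ ^ a * (ζ ^ b)⁻¹) ^ k` over `k < d` vanishes for `a ≠ b`, where `ζ = exp (2πi/d)`.
-/

open Matrix
open scoped ComplexOrder

/-- The rank-one matrix `|ψ⟩⟨ψ|`. -/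
def outer {ι : Type*} (v : ι → ℂ) : Matrix ι ι ℂ :=
  Matrix.vecMulVec v (star v)

/-- The product basis vector `e_i ⊗ e_j` of `ℂ^d ⊗ ℂ^d`. -/
def stdProdVec (d : ℕ) (i j : Fin d) : Fin d × Fin d → ℂ :=
  fun p => (if p.1 = i then 1 else 0) * (if p.2 = j then 1 else 0)

/-- The generalized Bell vector `g_{k,l} ∈ ℂ^d ⊗ ℂ^d`. -/
noncomputable def bellVec (d : ℕ) (k l : Fin d) : Fin d × Fin d → ℂ :=
  fun p =>
    if (p.2 : ℕ) = ((p.1 : ℕ) + (l : ℕ)) % d then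
      ((Real.sqrt d : ℂ))⁻¹ *
        Complex.exp (2 * Real.pi * Complex.I * ((p.1 : ℕ) * (k : ℕ)) / d)
    else 0

/-- The product basis resolves the identity. -/
lemma sum_outer_stdProdVec (d : ℕ) :
    ∑ i : Fin d, ∑ j : Fin d, outer (stdProdVec d i j) = 1 := by
  ext p q
  obtain ⟨a, b⟩ := p
  obtain ⟨a', b'⟩ := q
  simp only [Matrix.sum_apply, outer, Matrix.vecMulVec_apply, stdProdVec, Pi.star_apply,
    Matrix.one_apply, Prod.mk.injEq]
  by_cases h1 : a = a' <;> by_cases h2 : b = b' <;> simp [h1, h2, eq_comm]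

/-- The Bell vector in terms of the root of unity `exp (2πi/d)` and of subtraction in `Fin d`,
which is subtraction modulo `d`. -/
lemma bellVec_eq (d : ℕ) [NeZero d] (k l : Fin d) (p : Fin d × Fin d) :
    bellVec d k l p = if l = p.2 - p.1 then
      ((Real.sqrt d : ℂ))⁻¹ * (Complex.exp (2 * Real.pi * Complex.I / d) ^ (p.1 : ℕ)) ^ (k : ℕ)
      else 0 := by
  have h : ((p.2 : ℕ) = ((p.1 : ℕ) + (l : ℕ)) % d) ↔ l = p.2 - p.1 := by
    rw [← Fin.val_add, Fin.val_inj, eq_sub_iff_add_eq, add_comm l, eq_comm]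
  unfold bellVec
  simp only [h]
  rw [← pow_mul, ← Complex.exp_nat_mul]
  congr 3
  push_cast
  ring

/-- Orthogonality of the characters of `ℤ/d`. -/
lemma sum_character (d : ℕ) [NeZero d] {ζ : ℂ} (hζ : IsPrimitiveRoot ζ d) (a b : Fin d) :
    ∑ k : Fin d, (ζ ^ (a : ℕ) * (ζ ^ (b : ℕ))⁻¹) ^ (k : ℕ) = if a = b then (d : ℂ) else 0 := by
  have hζ0 : ζ ≠ 0 := hζ.ne_zero (NeZero.ne d)
  split_ifs with h
  · subst h
    simp [hζ0]
  · have hr : ζ ^ (a : ℕ) * (ζ ^ (b : ℕ))⁻¹ ≠ 1 := by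
      intro hr
      rw [mul_inv_eq_one₀ (pow_ne_zero _ hζ0)] at hr
      exact h (Fin.ext (hζ.pow_inj a.2 b.2 hr))
    rw [Fin.sum_univ_eq_sum_range (fun k => (ζ ^ (a : ℕ) * (ζ ^ (b : ℕ))⁻¹) ^ k) d,
      geom_sum_eq hr, mul_pow, inv_pow, ← pow_mul, ← pow_mul, mul_comm (a : ℕ), mul_comm (b : ℕ),
      pow_mul, pow_mul, hζ.pow_eq_one]
    simp

/-- The generalized Bell basis resolves the identity. -/
lemma sum_outer_bellVec (d : ℕ) [NeZero d] :
    ∑ k : Fin d, ∑ l : Fin d, outer (bellVec d k l) = 1 := by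
  have hζ := Complex.isPrimitiveRoot_exp d (NeZero.ne d)
  ext p q
  obtain ⟨a, b⟩ := p
  obtain ⟨a', b'⟩ := q
  simp only [Matrix.sum_apply, outer, Matrix.vecMulVec_apply, Pi.star_apply, bellVec_eq,
    Matrix.one_apply, Prod.mk.injEq]
  generalize Complex.exp (2 * Real.pi * Complex.I / d) = ζ at hζ
  have hstar : star ζ = ζ⁻¹ := by
    rw [Complex.inv_eq_conj (hζ.norm'_eq_one (NeZero.ne d))]
    rfl
  have hd : (d : ℂ) ≠ 0 := NeZero.ne _
  have hsqrt : ((Real.sqrt d : ℂ))⁻¹ * ((Real.sqrt d : ℂ))⁻¹ = (d : ℂ)⁻¹ := by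
    rw [← mul_inv, ← Complex.ofReal_mul, Real.mul_self_sqrt (Nat.cast_nonneg d)]
    simp
  have hterm : ∀ k : Fin d, (∑ l : Fin d,
      (if l = b - a then ((Real.sqrt d : ℂ))⁻¹ * (ζ ^ (a : ℕ)) ^ (k : ℕ) else 0) *
        star (if l = b' - a' then ((Real.sqrt d : ℂ))⁻¹ * (ζ ^ (a' : ℕ)) ^ (k : ℕ) else 0)) =
      (if b - a = b' - a' then (d : ℂ)⁻¹ else 0) *
        (ζ ^ (a : ℕ) * (ζ ^ (a' : ℕ))⁻¹) ^ (k : ℕ) := by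
    intro k
    simp only [ite_mul, zero_mul, Finset.sum_ite_eq', Finset.mem_univ, if_true]
    split_ifs
    · have hs : star ((Real.sqrt d : ℂ))⁻¹ = ((Real.sqrt d : ℂ))⁻¹ := by simp
      rw [star_mul', star_pow, star_pow, hstar, hs, ← hsqrt, mul_pow, inv_pow]
      ring
    · simp
  rw [Finset.sum_congr rfl fun k _ => hterm k, ← Finset.mul_sum, sum_character d hζ]
  by_cases h : a = a'
  · subst h
    simp [sub_left_inj, hd]
  · simp [h]

/-- For any two-outcome POVM `{M₀, M₁}` on `ℂ^d ⊗ ℂ^d`, the average probability of outcome 1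
on the `d²` product basis states plus the average probability of outcome 0 on the `d²`
generalized Bell states equals exactly `1`. -/
theorem average_error_product_vs_bell {d : ℕ} (hd : 1 ≤ d)
    (M₀ M₁ : Matrix (Fin d × Fin d) (Fin d × Fin d) ℂ)
    (hM₀ : M₀.PosSemidef) (hM₁ : M₁.PosSemidef) (hsum : M₀ + M₁ = 1) :
    (1 / (d : ℂ) ^ 2) * (∑ i : Fin d, ∑ j : Fin d, (M₁ * outer (stdProdVec d i j)).trace) +
        (1 / (d : ℂ) ^ 2) * (∑ k : Fin d, ∑ l : Fin d, (M₀ * outer (bellVec d k l)).trace)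
      = 1 := by
  have : NeZero d := ⟨by omega⟩
  have hd0 : (d : ℂ) ≠ 0 := NeZero.ne _
  simp only [← Matrix.trace_sum, ← Matrix.mul_sum]
  rw [sum_outer_stdProdVec, sum_outer_bellVec, mul_one, mul_one, ← mul_add, ← Matrix.trace_add,
    add_comm M₁, hsum, Matrix.trace_one]
  simp only [Fintype.card_prod, Fintype.card_fin]
  push_cast
  field_simp
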